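/- arXiv:math/0502322 — 2 statements merged into one kernel-verified Lean document; each statement's English description precedes it below -/
import Mathlib

section
/- Let F, G : ℝ → ℝ be continuous functions with F(x+1) = F(x) and G(x+1) = G(x) for all x ∈ ℝ, and with G(x) > 0 for all x. Let γ₁, γ₂ : ℝ → ℝ be differentiable functions satisfying γ₁′(s) = G(γ₁(s)) and γ₂′(s) = F(γ₁(s)) for all s ∈ ℝ. If the real number ∫₀¹ F(x)/G(x) dx is irrational, then there exist no s₀ ∈ ℝ and T > 0 such that both γ₁(s₀+T) − γ₁(s₀) ∈ ℤ and γ₂(s₀+T) − γ₂(s₀) ∈ ℤ. -/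
/-!
Along the curve `dy/dx = F/G`, so the substitution `u = γ₁ s` writes every increment of `γ₂` as an
integral of `F/G` between the corresponding values of `γ₁`. If `γ₁` grows by an integer `m`, then
by periodicity `γ₂` grows by `m ∫₀¹ F/G`; since `γ₁` is injective `m ≠ 0`, and `m ∫₀¹ F/G` is not
an integer when `∫₀¹ F/G` is irrational.
-/

open Set MeasureTheory

section ChangeOfVariables

variable {E : Type*} [NormedAddCommGroup E] [NormedSpace ℝ E]
  {f f' : ℝ → ℝ} {g : ℝ → E} {a b : ℝ}

theorem intervalIntegrable_deriv_smul_comp_iff_of_deriv_ne_zero (hf : ContinuousOn f (uIcc a b))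
    (hff' : ∀ x ∈ Ioo (min a b) (max a b), HasDerivAt f (f' x) x)
    (hf' : ∀ x ∈ Ioo (min a b) (max a b), f' x ≠ 0) :
    IntervalIntegrable (fun x ↦ f' x • (g ∘ f) x) volume a b ↔
      IntervalIntegrable g volume (f a) (f b) := by
  -- Darboux: `f'` has constant sign even though it need not be continuous.
  rcases hasDerivWithinAt_forall_lt_or_forall_gt_of_forall_ne (convex_Ioo _ _)
    (fun x hx ↦ (hff' x hx).hasDerivWithinAt) hf' with hneg | hpos
  · exact intervalIntegral.integrable_deriv_smul_comp_iff_of_deriv_nonpos hf hff'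
      fun x hx ↦ (hneg x hx).le
  · exact intervalIntegral.integrable_deriv_smul_comp_iff_of_deriv_nonneg hf hff'
      fun x hx ↦ (hpos x hx).le

theorem intervalIntegral_deriv_smul_comp_of_deriv_ne_zero (hf : ContinuousOn f (uIcc a b))
    (hff' : ∀ x ∈ Ioo (min a b) (max a b), HasDerivAt f (f' x) x)
    (hf' : ∀ x ∈ Ioo (min a b) (max a b), f' x ≠ 0) :
    ∫ x in a..b, f' x • (g ∘ f) x = ∫ u in f a..f b, g u := by
  rcases hasDerivWithinAt_forall_lt_or_forall_gt_of_forall_ne (convex_Ioo _ _)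
    (fun x hx ↦ (hff' x hx).hasDerivWithinAt) hf' with hneg | hpos
  · exact intervalIntegral.integral_deriv_smul_comp_of_deriv_nonpos hf hff'
      fun x hx ↦ (hneg x hx).le
  · exact intervalIntegral.integral_deriv_smul_comp_of_deriv_nonneg hf hff'
      fun x hx ↦ (hpos x hx).le

end ChangeOfVariables

section IntegralCurve

variable {E : Type*} [NormedAddCommGroup E] [NormedSpace ℝ E] [CompleteSpace E]
  {F : ℝ → E} {G : ℝ → ℝ} {x : ℝ → ℝ} {y : ℝ → E} {a b : ℝ}

theorem integral_inv_smul_eq_sub_of_hasDerivAt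
    (hx : ∀ s ∈ uIcc a b, HasDerivAt x (G (x s)) s)
    (hy : ∀ s ∈ uIcc a b, HasDerivAt y (F (x s)) s)
    (hG : ∀ s ∈ uIcc a b, G (x s) ≠ 0)
    (hint : IntervalIntegrable (fun u ↦ (G u)⁻¹ • F u) volume (x a) (x b)) :
    ∫ u in x a..x b, (G u)⁻¹ • F u = y b - y a := by
  have hcont : ContinuousOn x (uIcc a b) := HasDerivAt.continuousOn hx
  have hx' : ∀ s ∈ Ioo (min a b) (max a b), HasDerivAt x (G (x s)) s :=
    fun s hs ↦ hx s (Ioo_subset_Icc_self hs)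
  have hG' : ∀ s ∈ Ioo (min a b) (max a b), G (x s) ≠ 0 :=
    fun s hs ↦ hG s (Ioo_subset_Icc_self hs)
  rw [← intervalIntegrable_deriv_smul_comp_iff_of_deriv_ne_zero hcont hx' hG'] at hint
  rw [← intervalIntegral_deriv_smul_comp_of_deriv_ne_zero hcont hx' hG']
  refine intervalIntegral.integral_eq_sub_of_hasDerivAt (fun s hs ↦ ?_) hint
  simpa only [Function.comp_apply, smul_inv_smul₀ (hG s hs)] using hy s hs

theorem sub_eq_zsmul_integral_of_periodic {p : ℝ} {m : ℤ}
    (hx : ∀ s ∈ uIcc a b, HasDerivAt x (G (x s)) s)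
    (hy : ∀ s ∈ uIcc a b, HasDerivAt y (F (x s)) s)
    (hG : ∀ s ∈ uIcc a b, G (x s) ≠ 0)
    (hper : Function.Periodic (fun u ↦ (G u)⁻¹ • F u) p)
    (hint : ∀ c d, IntervalIntegrable (fun u ↦ (G u)⁻¹ • F u) volume c d)
    (hm : x b - x a = m • p) :
    y b - y a = m • ∫ u in 0..p, (G u)⁻¹ • F u :=
  calc y b - y a = ∫ u in x a..x b, (G u)⁻¹ • F u :=
        (integral_inv_smul_eq_sub_of_hasDerivAt hx hy hG (hint _ _)).symm
    _ = ∫ u in x a..x a + m • p, (G u)⁻¹ • F u := by rw [← hm, add_sub_cancel]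
    _ = m • ∫ u in x a..x a + p, (G u)⁻¹ • F u :=
        hper.intervalIntegral_add_zsmul_eq m (x a) hint
    _ = m • ∫ u in 0..p, (G u)⁻¹ • F u := by
        rw [hper.intervalIntegral_add_eq (x a) 0, zero_add]

end IntegralCurve

theorem ne_of_hasDerivAt_ne_zero {f f' : ℝ → ℝ} {a b : ℝ} (hab : a < b)
    (hf : ContinuousOn f (Icc a b)) (hff' : ∀ x ∈ Ioo a b, HasDerivAt f (f' x) x)
    (hf' : ∀ x ∈ Ioo a b, f' x ≠ 0) : f a ≠ f b := fun heq ↦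
  let ⟨c, hc, hc0⟩ := exists_hasDerivAt_eq_zero hab hf heq hff'
  hf' c hc hc0

theorem stmt_2_general {F G γ₁ γ₂ : ℝ → ℝ} {a b : ℝ} (hab : a < b)
    (hγ₁ : ∀ s ∈ Icc a b, HasDerivAt γ₁ (G (γ₁ s)) s)
    (hγ₂ : ∀ s ∈ Icc a b, HasDerivAt γ₂ (F (γ₁ s)) s)
    (hG : ∀ s ∈ Icc a b, G (γ₁ s) ≠ 0)
    (hper : Function.Periodic (fun x ↦ F x / G x) 1)
    (hint : IntervalIntegrable (fun x ↦ F x / G x) volume 0 1)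
    (hirr : Irrational (∫ x in (0 : ℝ)..1, F x / G x)) :
    ¬ ((∃ m : ℤ, γ₁ b - γ₁ a = m) ∧ ∃ n : ℤ, γ₂ b - γ₂ a = n) := by
  rintro ⟨⟨m, hm⟩, ⟨n, hn⟩⟩
  have hne : γ₁ a ≠ γ₁ b := ne_of_hasDerivAt_ne_zero hab (HasDerivAt.continuousOn hγ₁)
    (fun s hs ↦ hγ₁ s (Ioo_subset_Icc_self hs)) fun s hs ↦ hG s (Ioo_subset_Icc_self hs)
  have hm0 : m ≠ 0 := by
    rintro rfl
    exact hne (sub_eq_zero.1 (hm.trans Int.cast_zero)).symm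
  have hincr : γ₂ b - γ₂ a = m * ∫ x in (0 : ℝ)..1, F x / G x := by
    rw [← uIcc_of_le hab.le] at hγ₁ hγ₂ hG
    have hslope (x : ℝ) : F x / G x = (G x)⁻¹ • F x := div_eq_inv_mul _ _
    have hint' := hper.intervalIntegrable₀ one_ne_zero hint
    simp only [hslope] at hper hint' ⊢
    rw [← zsmul_eq_mul]
    exact sub_eq_zsmul_integral_of_periodic hγ₁ hγ₂ hG hper hint' (by rw [hm, zsmul_one])
  exact (hirr.intCast_mul hm0).ne_int n (hincr.symm.trans hn)

/-- Example 2.4: if `∫₀¹ F/G` is irrational, no integral curve of the vector field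
`W = G(x)∂ₓ + F(x)∂_y` on `ℝ²` (with `F, G` of period `1`, `G > 0`) closes up
modulo `ℤ × ℤ`, i.e. projects to a closed curve on the torus. -/
theorem stmt_2 (F G : ℝ → ℝ) (hF : Continuous F) (hG : Continuous G)
    (hFper : ∀ x : ℝ, F (x + 1) = F x) (hGper : ∀ x : ℝ, G (x + 1) = G x)
    (hGpos : ∀ x : ℝ, 0 < G x)
    (γ₁ γ₂ : ℝ → ℝ)
    (hγ₁ : ∀ s : ℝ, HasDerivAt γ₁ (G (γ₁ s)) s)
    (hγ₂ : ∀ s : ℝ, HasDerivAt γ₂ (F (γ₁ s)) s)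
    (hirr : Irrational (∫ x in (0:ℝ)..1, F x / G x)) :
    ¬ ∃ (s₀ T : ℝ), 0 < T ∧
      (∃ m : ℤ, γ₁ (s₀ + T) - γ₁ s₀ = (m : ℝ)) ∧
      (∃ n : ℤ, γ₂ (s₀ + T) - γ₂ s₀ = (n : ℝ)) := by
  rintro ⟨s₀, T, hT, hclosed⟩
  exact stmt_2_general (lt_add_of_pos_right s₀ hT) (fun s _ ↦ hγ₁ s) (fun s _ ↦ hγ₂ s)
    (fun s _ ↦ (hGpos _).ne') (Function.Periodic.div hFper hGper)
    ((hF.div hG fun x ↦ (hGpos x).ne').intervalIntegrable 0 1) hirr hclosed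
end

section
/- Let S be a topological space and let G be a group acting on ℝ × S by maps of the form g·(t,x) = (t + T_g, σ_g(x)), where T_g ∈ ℝ and each σ_g : S → S is a homeomorphism. Let d : (ℝ × S) × (ℝ × S) → ℝ be continuous and nonnegative, invariant under the G-action (d(g·p, g·q) = d(p,q) for all g ∈ G) and invariant under all time translations τ_s(t,x) = (t+s, x) (d(τ_s p, τ_s q) = d(p,q) for all s ∈ ℝ). Fix φ₀ ∈ G, set T = T_{φ₀}, and let C = {ψ⁻¹φ₀ψ : ψ ∈ G} be its conjugacy class (so T_φ = T for all φ ∈ C, since g ↦ T_g is a homomorphism into the abelian group ℝ). Let K^S ⊆ S be a compact subset with ⋃_{g∈G} σ_g(K^S) = S. Assume that the set of φ ∈ C for which there exists x ∈ K^S with d((0,x),(T, σ_φ(x))) ≠ 0 is finite. Then the function d_S : S → ℝ, d_S(x) = d((0,x), (T, σ_{φ₀}(x))), attains its maximum on S. -/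
/-!
Invariance of `D` gives `D (g • x) (φ • g • x) = D x ((g⁻¹ * φ * g) • x)`. Hence, if the translates
of a compact set `K` cover the space, the displacement of `φ` takes on the whole space exactly the
values that the displacements of all the conjugates of `φ` take on `K`. Only finitely many of these
do not vanish on `K`, so the supremum is a maximum of finitely many maxima over `K`. For the
time separation `d` of a static spacetime, `D x y = d (0, x) (t, y)` is invariant because the time
shift of a deck transformation can be undone by a time translation.
-/

open scoped Pointwise

theorem exists_forall_le_of_isCompact_of_finite_ne_zero {ι X R : Type*} [TopologicalSpace X]
    [LinearOrder R] [TopologicalSpace R] [ClosedIciTopology R] [Zero R]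
    {K : Set X} (hK : IsCompact K) (hKne : K.Nonempty) {C : Set ι} (hC : C.Nonempty)
    {f : ι → X → R} (hcont : ∀ i ∈ C, ContinuousOn (f i) K)
    (hnonneg : ∀ i ∈ C, ∀ x ∈ K, 0 ≤ f i x)
    (hfin : {i | i ∈ C ∧ ∃ x ∈ K, f i x ≠ 0}.Finite) :
    ∃ i ∈ C, ∃ x ∈ K, ∀ j ∈ C, ∀ y ∈ K, f j y ≤ f i x := by
  obtain ⟨i₀, hi₀⟩ := hC
  have : Nonempty X := hKne.to_type
  choose! argmax hargmax hmax using fun i hi ↦ hK.exists_isMaxOn hKne (hcont i hi)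
  -- Inserting `i₀` covers the case where every `f i` with `i ∈ C` vanishes on `K`.
  obtain ⟨i, hi, hle⟩ := Set.exists_max_image _ (fun i ↦ f i (argmax i)) (hfin.insert i₀)
    (Set.insert_nonempty _ _)
  have hiC : i ∈ C := hi.elim (fun h ↦ h ▸ hi₀) And.left
  refine ⟨i, hiC, argmax i, hargmax i hiC, fun j hj y hy ↦ ?_⟩
  by_cases hzero : f j y = 0
  · exact hzero ▸ hnonneg i hiC _ (hargmax i hiC)
  · exact (hmax j hj hy).trans (hle j (Or.inr ⟨hj, y, hy, hzero⟩))

theorem isConj_iff_exists_eq_inv_mul_mul {G : Type*} [Group G] {φ ψ : G} :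
    IsConj φ ψ ↔ ∃ g : G, ψ = g⁻¹ * φ * g :=
  isConj_comm.trans <| isConj_iff.trans <| exists_congr fun g ↦ by
    rw [mul_inv_eq_iff_eq_mul, mul_assoc, eq_inv_mul_iff_mul_eq]

/-- The displacement function `x ↦ D x (g • x)` of `g` with respect to a two-point function `D`,
the function to be maximised. `D` need not be a metric: for a Lorentzian time separation `d` and a
time shift `t`, it is `D x y = d (0, x) (t, y)`. -/
def displacement {G X R : Type*} [SMul G X] (D : X → X → R) (g : G) (x : X) : R :=
  D x (g • x)

theorem displacement_smul {G X R : Type*} [Group G] [MulAction G X] {D : X → X → R} {g : G}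
    (hD : ∀ x y, D (g • x) (g • y) = D x y) (φ : G) (x : X) :
    displacement D φ (g • x) = displacement D (g⁻¹ * φ * g) x := by
  rw [displacement, displacement, ← hD x, smul_smul, smul_smul, mul_assoc, mul_inv_cancel_left]

theorem stmt_6_general {G X R : Type*} [Group G] [TopologicalSpace X] [Nonempty X]
    [MulAction G X] [LinearOrder R] [TopologicalSpace R] [ClosedIciTopology R] [Zero R]
    {D : X → X → R} (hD : ∀ (g : G) (x y : X), D (g • x) (g • y) = D x y)
    {K : Set X} (hK : IsCompact K) (hcover : ⋃ g : G, g • K = Set.univ) {φ : G}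
    (hcont : ∀ ψ : G, IsConj φ ψ → ContinuousOn (displacement D ψ) K)
    (hnonneg : ∀ ψ : G, IsConj φ ψ → ∀ x ∈ K, 0 ≤ displacement D ψ x)
    (hfin : {ψ : G | IsConj φ ψ ∧ ∃ x ∈ K, displacement D ψ x ≠ 0}.Finite) :
    ∃ x₀ : X, ∀ x : X, displacement D φ x ≤ displacement D φ x₀ := by
  have exists_translate (x : X) : ∃ g : G, ∃ y ∈ K, g • y = x :=
    Set.mem_iUnion.1 (hcover ▸ Set.mem_univ x)
  obtain ⟨-, y₀, hy₀, -⟩ := exists_translate (Classical.arbitrary X)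
  obtain ⟨ψ, hψ, z, -, hmax⟩ := exists_forall_le_of_isCompact_of_finite_ne_zero hK ⟨y₀, hy₀⟩
    (C := {ψ | IsConj φ ψ}) ⟨φ, IsConj.refl φ⟩ hcont hnonneg hfin
  obtain ⟨h, rfl⟩ := isConj_iff_exists_eq_inv_mul_mul.1 hψ
  refine ⟨h • z, fun x ↦ ?_⟩
  obtain ⟨g, y, hy, rfl⟩ := exists_translate x
  rw [displacement_smul (hD g), displacement_smul (hD h)]
  exact hmax _ (isConj_iff_exists_eq_inv_mul_mul.2 ⟨g, rfl⟩) y hy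

/-- The core of the proof of Proposition 4.4: with a group `G` acting on `ℝ × S` by
`g • (t,x) = (t + T g, σ g x)`, a continuous nonnegative `d` invariant under the
action and under time translations, a compact `K^S ⊆ S` whose images `σ g '' K^S`
cover `S`, and only finitely many conjugates `φ` of `φ₀` with
`d((0,x),(T φ₀, σ φ x)) ≢ 0` on `K^S`, the function
`x ↦ d((0,x),(T φ₀, σ φ₀ x))` attains its maximum on `S`. -/
theorem stmt_6 (S : Type*) [TopologicalSpace S] [Nonempty S]
    (G : Type*) [Group G]
    (T : G → ℝ) (σ : G → S ≃ₜ S)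
    (hT : ∀ g h : G, T (g * h) = T g + T h)
    (hσone : ∀ x : S, σ 1 x = x)
    (hσmul : ∀ (g h : G) (x : S), σ (g * h) x = σ g (σ h x))
    (d : (ℝ × S) → (ℝ × S) → ℝ)
    (hdcont : Continuous fun p : (ℝ × S) × (ℝ × S) => d p.1 p.2)
    (hdnonneg : ∀ p q : ℝ × S, 0 ≤ d p q)
    (hdinv : ∀ (g : G) (p q : ℝ × S),
      d (p.1 + T g, σ g p.2) (q.1 + T g, σ g q.2) = d p q)
    (hdtrans : ∀ (s : ℝ) (p q : ℝ × S),
      d (p.1 + s, p.2) (q.1 + s, q.2) = d p q)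
    (φ₀ : G)
    (KS : Set S) (hKS : IsCompact KS)
    (hcover : ⋃ g : G, (σ g) '' KS = Set.univ)
    (hfin : {φ : G | (∃ ψ : G, φ = ψ⁻¹ * φ₀ * ψ) ∧
        ∃ x ∈ KS, d (0, x) (T φ₀, σ φ x) ≠ 0}.Finite) :
    ∃ x₀ : S, ∀ x : S,
      d (0, x) (T φ₀, σ φ₀ x) ≤ d (0, x₀) (T φ₀, σ φ₀ x₀) := by
  let : MulAction G S := { smul := fun g ↦ σ g, one_smul := hσone, mul_smul := hσmul }
  have time_slice_inv (g : G) (x y : S) :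
      d (0, σ g x) (T φ₀, σ g y) = d (0, x) (T φ₀, y) :=
    (hdtrans (T g) (0, σ g x) (T φ₀, σ g y)).symm.trans (hdinv g (0, x) (T φ₀, y))
  have continuous_displacement (φ : G) : Continuous fun x ↦ d (0, x) (T φ₀, σ φ x) :=
    hdcont.comp (f := fun x ↦ ((0, x), (T φ₀, σ φ x))) (by fun_prop)
  exact stmt_6_general (D := fun x y ↦ d (0, x) (T φ₀, y)) time_slice_inv hKS hcover
    (fun φ _ ↦ (continuous_displacement φ).continuousOn) (fun _ _ _ _ ↦ hdnonneg _ _)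
    (by simp only [isConj_iff_exists_eq_inv_mul_mul]; exact hfin)
end
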